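/- Let ρ and ρ′ be d×d complex density matrices that are not unitarily equivalent (i.e., their eigenvalue vectors, with multiplicity, differ as multisets). Then the following are equivalent: (i) S(ρ) < S(ρ′) and rank(ρ) ≤ rank(ρ′), where S(ρ) = −Tr(ρ ln ρ) is the von Neumann entropy; (ii) there exist an integer n ≥ 1 and a density matrix ρ′_n of size d^n×d^n (a state on n copies of the d-dimensional system, indexed by n-tuples) such that λ(ρ′_n) ≺ λ(ρ^{⊗n}) and, for every i ∈ {1,…,n}, the partial trace of ρ′_n over all tensor factors except the i-th equals ρ′. -/

import Mathlib

/-- The sum of the `k` largest entries of a vector (equivalently, for vectors with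
nonnegative entries, the maximum of `∑ i ∈ s, x i` over subsets `s` of cardinality at
most `k`; this also accounts for padding with zeros). -/
noncomputable def topSum {ι : Type*} [Fintype ι] [DecidableEq ι] (x : ι → ℝ) (k : ℕ) : ℝ :=
  ((Finset.univ : Finset ι).powerset.filter (fun s => s.card ≤ k)).sup'
    ⟨∅, by simp⟩ (fun s => ∑ i ∈ s, x i)

/-- A probability vector: nonnegative entries summing to 1. -/
def IsProbVec {ι : Type*} [Fintype ι] (x : ι → ℝ) : Prop :=
  (∀ i, 0 ≤ x i) ∧ ∑ i, x i = 1

/-- `x ≺ y` (majorization, after padding with zeros to a common dimension): every partial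
sum of the `k` largest entries of `x` is at most that of `y`, with equal total sums. -/
def PMaj {ι κ : Type*} [Fintype ι] [DecidableEq ι] [Fintype κ] [DecidableEq κ]
    (x : ι → ℝ) (y : κ → ℝ) : Prop :=
  (∀ k : ℕ, topSum x k ≤ topSum y k) ∧ (∑ i, x i = ∑ j, y j)

/-- Tensor product of two vectors: `(x ⊗ y)_{(i,j)} = x_i y_j`. -/
def pvTensor {ι κ : Type*} (x : ι → ℝ) (y : κ → ℝ) : ι × κ → ℝ :=
  fun p => x p.1 * y p.2

open scoped ComplexOrder

/-- The `n`-fold Kronecker power of a `d × d` matrix, indexed by `n`-tuples. -/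
noncomputable def mpow {d : ℕ} (ρ : Matrix (Fin d) (Fin d) ℂ) (n : ℕ) :
    Matrix (Fin n → Fin d) (Fin n → Fin d) ℂ :=
  Matrix.of fun f g => ∏ j, ρ (f j) (g j)

/-- Partial trace over all tensor factors except the `i`-th:
`(Tr_{≠i} M)_{ab}` sums the entries `M_{f,g}` over all pairs `f, g` of `n`-tuples
with `f i = a`, `g i = b`, agreeing on all other components. -/
noncomputable def ptrExcept {d n : ℕ} (i : Fin n)
    (M : Matrix (Fin n → Fin d) (Fin n → Fin d) ℂ) : Matrix (Fin d) (Fin d) ℂ :=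
  Matrix.of fun a b =>
    ∑ g ∈ Finset.univ.filter (fun g : Fin n → Fin d => g i = a),
      M g (Function.update g i b)

/-!
Necessity: let `p`, `q` be the spectra of `ρ`, `ρ'` and let `P` be the diagonal of the `n`-copy
state in the product eigenbasis of `ρ'`, so that `P ≺ p^{⊗n}` by Schur's theorem and every marginal
of `P` is `q`. Schur concavity and subadditivity give `n H(p) = H(p^{⊗n}) ≤ H(P) ≤ n H(q)`. In the
case of equality `P` is both `q^{⊗n}` and a permutation of `p^{⊗n}`; comparing power sums, `q` is
then a permutation of `p`.

Sufficiency: since `H(p) < H(q)`, for small `η` the typical sequences of `p` can be injected into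
the typical sequences of `(1 - η) q + η e_j`, and the rank condition makes room for the remaining
support of `p^{⊗n}`. So there are rearrangements of `p^{⊗n}` whose site-averaged marginals surround
`q` in the simplex; a convex combination of them has averaged marginal exactly `q`, and averaging
over cyclic shifts makes all marginals equal. A local unitary rotates the result into `ρ'`.
-/

section Majorization

open Finset

variable {ι κ : Type*} [Fintype ι] [DecidableEq ι] [Fintype κ] [DecidableEq κ]

lemma topSum_le_iff {x : ι → ℝ} {k : ℕ} {c : ℝ} :
    topSum x k ≤ c ↔ ∀ s : Finset ι, #s ≤ k → ∑ i ∈ s, x i ≤ c := by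
  simp [topSum, Finset.sup'_le_iff]

lemma sum_le_topSum (x : ι → ℝ) {k : ℕ} {s : Finset ι} (hs : #s ≤ k) :
    ∑ i ∈ s, x i ≤ topSum x k :=
  topSum_le_iff.1 le_rfl s hs

lemma exists_topSum_eq (x : ι → ℝ) (k : ℕ) :
    ∃ s : Finset ι, #s ≤ k ∧ topSum x k = ∑ i ∈ s, x i := by
  obtain ⟨s, hs, h⟩ := exists_mem_eq_sup' (s := (univ : Finset ι).powerset.filter (#· ≤ k))
    ⟨∅, by simp⟩ (fun s => ∑ i ∈ s, x i)
  exact ⟨s, (mem_filter.1 hs).2, h⟩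

lemma topSum_comp_equiv_le (e : ι ≃ κ) (y : κ → ℝ) (k : ℕ) : topSum (y ∘ e) k ≤ topSum y k :=
  topSum_le_iff.2 fun s hs => by
    simpa using sum_le_topSum y (s := s.map e.toEmbedding) (by rwa [card_map])

lemma topSum_comp_equiv (e : ι ≃ κ) (y : κ → ℝ) (k : ℕ) : topSum (y ∘ e) k = topSum y k := by
  refine (topSum_comp_equiv_le e y k).antisymm ?_
  simpa only [Function.comp_assoc, Equiv.self_comp_symm, Function.comp_id] using
    topSum_comp_equiv_le e.symm (y ∘ e) k

lemma PMaj.comp_equiv {ι' κ' : Type*} [Fintype ι'] [DecidableEq ι'] [Fintype κ'] [DecidableEq κ']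
    {x : ι → ℝ} {y : κ → ℝ} (h : PMaj x y) (e : ι' ≃ ι) (f : κ' ≃ κ) : PMaj (x ∘ e) (y ∘ f) :=
  ⟨fun k => by simpa only [topSum_comp_equiv] using h.1 k,
    by simpa only [Function.comp_apply, Equiv.sum_comp] using h.2⟩

lemma PMaj.trans {μ : Type*} [Fintype μ] [DecidableEq μ] {x : ι → ℝ} {y : κ → ℝ} {z : μ → ℝ}
    (h : PMaj x y) (h' : PMaj y z) : PMaj x z :=
  ⟨fun k => (h.1 k).trans (h'.1 k), h.2.trans h'.2⟩

lemma PMaj.nonneg {x : ι → ℝ} {y : κ → ℝ} (h : PMaj x y) (hy : ∀ j, 0 ≤ y j) (i : ι) :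
    0 ≤ x i := by
  have hle : ∑ j ∈ univ.erase i, x j ≤ ∑ j, x j :=
    calc ∑ j ∈ univ.erase i, x j ≤ topSum y (#(univ.erase i)) :=
          (sum_le_topSum x le_rfl).trans (h.1 _)
      _ ≤ ∑ j, y j := topSum_le_iff.2 fun s _ => sum_le_univ_sum_of_nonneg hy
      _ = ∑ j, x j := h.2.symm
  linarith [add_sum_erase univ x (mem_univ i)]

lemma PMaj.isProbVec {x : ι → ℝ} {y : κ → ℝ} (h : PMaj x y) (hy : IsProbVec y) : IsProbVec x :=
  ⟨h.nonneg hy.1, h.2.trans hy.2⟩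

lemma PMaj.card_support_le {x : ι → ℝ} {y : κ → ℝ} (h : PMaj x y) (hy : ∀ j, 0 ≤ y j) :
    #{j | y j ≠ 0} ≤ #{i | x i ≠ 0} := by
  obtain ⟨s, hs, hsy⟩ := exists_topSum_eq y #{i | x i ≠ 0}
  have hle : ∑ j, y j ≤ ∑ j ∈ s, y j :=
    calc ∑ j, y j = ∑ i with x i ≠ 0, x i := by rw [sum_filter_ne_zero, h.2]
      _ ≤ topSum y #{i | x i ≠ 0} := (sum_le_topSum x le_rfl).trans (h.1 _)
      _ = ∑ j ∈ s, y j := hsy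
  refine (card_le_card fun j hj => ?_).trans hs
  by_contra hjs
  have hins : ∑ i ∈ insert j s, y i ≤ ∑ i, y i := sum_le_univ_sum_of_nonneg hy
  rw [sum_insert hjs] at hins
  exact (mem_filter.1 hj).2 ((hy j).antisymm' (by linarith))

lemma PMaj.sum_min_le {x : ι → ℝ} {y : κ → ℝ} (h : PMaj x y) {t : ℝ} (ht : 0 ≤ t) :
    ∑ j, min (y j) t ≤ ∑ i, min (x i) t := by
  set s : Finset ι := {i | t < x i}
  obtain ⟨r, hrs, hr⟩ := exists_topSum_eq y #s
  have hx : ∑ i, min (x i) t = #s * t + (∑ i, x i - ∑ i ∈ s, x i) := by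
    rw [← sum_add_sum_compl s, ← sum_add_sum_compl s x, add_sub_cancel_left]
    congr 1
    · rw [← nsmul_eq_mul, ← sum_const]
      exact sum_congr rfl fun i hi => min_eq_right (mem_filter.1 hi).2.le
    · exact sum_congr rfl fun i hi => min_eq_left (by simpa [s] using hi)
  have hy : ∑ j, min (y j) t ≤ #r * t + (∑ j, y j - ∑ j ∈ r, y j) := by
    rw [← sum_add_sum_compl r, ← sum_add_sum_compl r y, add_sub_cancel_left]
    refine add_le_add ?_ (sum_le_sum fun j _ => min_le_left _ _)
    simpa only [nsmul_eq_mul] using sum_le_card_nsmul r _ t fun j _ => min_le_right _ _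
  have hcard : (#r : ℝ) * t ≤ #s * t := by gcongr
  linarith [(sum_le_topSum x (le_refl #s)).trans (h.1 _), h.2]

lemma convex_setOf_pMaj (y : κ → ℝ) : Convex ℝ {x : ι → ℝ | PMaj x y} := by
  intro x hx z hz a b ha hb hab
  have hsum (s : Finset ι) :
      ∑ i ∈ s, (a • x + b • z) i = a * ∑ i ∈ s, x i + b * ∑ i ∈ s, z i := by
    simp [sum_add_distrib, mul_sum]
  refine ⟨fun k => topSum_le_iff.2 fun s hs => ?_, ?_⟩
  · calc ∑ i ∈ s, (a • x + b • z) i = a * ∑ i ∈ s, x i + b * ∑ i ∈ s, z i := hsum s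
      _ ≤ a * topSum y k + b * topSum y k := by
          gcongr
          exacts [(sum_le_topSum x hs).trans (hx.1 k), (sum_le_topSum z hs).trans (hz.1 k)]
      _ = topSum y k := by rw [← add_mul, hab, one_mul]
  · rw [hsum, hx.2, hz.2, ← add_mul, hab, one_mul]

lemma pMaj_of_mem_convexHull {x y : ι → ℝ}
    (h : x ∈ convexHull ℝ (Set.range fun σ : Equiv.Perm ι => y ∘ σ)) : PMaj x y := by
  refine convexHull_min ?_ (convex_setOf_pMaj y) h
  rintro _ ⟨σ, rfl⟩
  exact ⟨fun k => (topSum_comp_equiv σ y k).le, Equiv.sum_comp σ y⟩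

lemma pMaj_mulVec_of_mem_doublyStochastic {D : Matrix ι ι ℝ} (hD : D ∈ doublyStochastic ℝ ι)
    (y : ι → ℝ) : PMaj (D.mulVec y) y := by
  obtain ⟨w, hw0, hw1, rfl⟩ := exists_eq_sum_perm_of_mem_doublyStochastic hD
  refine pMaj_of_mem_convexHull <|
    mem_convexHull_of_exists_fintype w (fun σ => y ∘ σ) hw0 hw1 (fun σ => ⟨σ, rfl⟩) ?_
  simp only [Matrix.sum_mulVec, Matrix.smul_mulVec, Matrix.permMatrix_mulVec]

end Majorization

section Entropy

open Finset MeasureTheory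

variable {ι κ : Type*} [Fintype ι] [Fintype κ]

/-- The Shannon entropy `-∑ i, x i * log (x i)` in nats, with `0 * log 0 = 0`. -/
noncomputable def shannonEntropy (x : ι → ℝ) : ℝ := ∑ i, Real.negMulLog (x i)

lemma continuous_shannonEntropy : Continuous (shannonEntropy : (ι → ℝ) → ℝ) :=
  continuous_finsetSum _ fun i _ => Real.continuous_negMulLog.comp (continuous_apply i)

lemma IsProbVec.le_one {x : ι → ℝ} (hx : IsProbVec x) (i : ι) : x i ≤ 1 :=
  hx.2 ▸ single_le_sum (fun j _ => hx.1 j) (mem_univ i)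

lemma integrableOn_min_div {a : ℝ} (ha : 0 ≤ a) :
    IntegrableOn (fun t => min a t / t) (Set.Ioo 0 1) := by
  refine Measure.integrableOn_of_bounded (M := 1) (by simp)
    ((measurable_const.min measurable_id).div measurable_id).aestronglyMeasurable ?_
  filter_upwards [ae_restrict_mem measurableSet_Ioo] with t ht
  rw [Real.norm_of_nonneg (div_nonneg (le_min ha ht.1.le) ht.1.le)]
  exact div_le_one_of_le₀ (min_le_right _ _) ht.1.le

lemma setIntegral_min_div {a : ℝ} (h0 : 0 ≤ a) (h1 : a ≤ 1) :
    ∫ t in Set.Ioo 0 1, min a t / t = Real.negMulLog a + a := by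
  rcases h0.eq_or_lt with rfl | h0
  · rw [Real.negMulLog_zero, add_zero]
    refine setIntegral_eq_zero_of_forall_eq_zero fun t ht => ?_
    rw [min_eq_left ht.1.le, zero_div]
  have hI := (intervalIntegrable_iff_integrableOn_Ioo_of_le (zero_le_one' ℝ)).2
    (integrableOn_min_div h0.le)
  rw [← integral_Ioc_eq_integral_Ioo, ← intervalIntegral.integral_of_le zero_le_one,
    ← intervalIntegral.integral_add_adjacent_intervals (b := a)
      (hI.mono_set (Set.uIcc_subset_uIcc_left (Set.mem_uIcc.2 (.inl ⟨h0.le, h1⟩))))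
      (hI.mono_set (Set.uIcc_subset_uIcc_right (Set.mem_uIcc.2 (.inl ⟨h0.le, h1⟩))))]
  have hleft : ∫ t in (0 : ℝ)..a, min a t / t = a := by
    rw [intervalIntegral.integral_congr_Ioo_of_le (g := fun _ => 1) h0.le fun t ht => by
      rw [min_eq_right ht.2.le, div_self ht.1.ne']]
    simp
  have hright : ∫ t in a..1, min a t / t = Real.negMulLog a := by
    rw [intervalIntegral.integral_congr_Ioo_of_le (g := fun t => a * t⁻¹) h1 fun t ht => by
      rw [min_eq_left ht.1.le, div_eq_mul_inv], intervalIntegral.integral_const_mul,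
      integral_inv_of_pos h0 one_pos, one_div, Real.log_inv, Real.negMulLog, mul_neg, neg_mul]
  rw [hleft, hright, add_comm]

lemma IsProbVec.integrableOn_sum_min_div {x : ι → ℝ} (hx : IsProbVec x) :
    IntegrableOn (fun t => ∑ i, min (x i) t / t) (Set.Ioo 0 1) :=
  integrable_finsetSum _ fun i _ => integrableOn_min_div (hx.1 i)

lemma IsProbVec.setIntegral_sum_min_div {x : ι → ℝ} (hx : IsProbVec x) :
    ∫ t in Set.Ioo 0 1, ∑ i, min (x i) t / t = shannonEntropy x + 1 := by
  rw [integral_finsetSum _ fun i _ => integrableOn_min_div (hx.1 i), shannonEntropy]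
  conv_rhs => rw [← hx.2, ← sum_add_distrib]
  exact sum_congr rfl fun i _ => setIntegral_min_div (hx.1 i) (hx.le_one i)

lemma continuousOn_sum_min_div (x : ι → ℝ) :
    ContinuousOn (fun t => ∑ i, min (x i) t / t) (Set.Ioo 0 1) :=
  continuousOn_finsetSum _ fun _ _ => (continuous_const.min continuous_id).continuousOn.div
    continuousOn_id fun _ ht => ht.1.ne'

lemma exists_perm_of_card_fiber_eq {β : Type*} [DecidableEq β] {f g : ι → β}
    (h : ∀ b, #{i | f i = b} = #{i | g i = b}) : ∃ σ : Equiv.Perm ι, f = g ∘ σ := by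
  have e (b : β) : {i // f i = b} ≃ {i // g i = b} :=
    Fintype.equivOfCardEq <| by simpa only [Fintype.card_subtype] using h b
  exact ⟨Equiv.ofFiberEquiv e, funext fun i => (Equiv.ofFiberEquiv_map e i).symm⟩

-- The second difference of `min a` at `v` with a small step `ε` is `-ε` if `a = v`, else `0`.
lemma eventually_sum_min_second_difference (x : ι → ℝ) (v : ℝ) :
    ∀ᶠ ε in nhdsWithin 0 (Set.Ioi 0),
      ∑ i, min (x i) (v + ε) + ∑ i, min (x i) (v - ε) - 2 * ∑ i, min (x i) v =
        -(#{i | x i = v} * ε) := by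
  have hterm (i : ι) : ∀ᶠ ε in nhdsWithin (0 : ℝ) (Set.Ioi 0),
      min (x i) (v + ε) + min (x i) (v - ε) - 2 * min (x i) v = if x i = v then -ε else 0 := by
    rcases lt_trichotomy (x i) v with h | h | h
    · filter_upwards [Ioo_mem_nhdsGT (sub_pos.2 h)] with ε hε
      rw [if_neg h.ne, min_eq_left (by linarith [hε.1]), min_eq_left (by linarith [hε.2]),
        min_eq_left h.le]
      ring
    · filter_upwards [self_mem_nhdsWithin] with ε (hε : 0 < ε)
      rw [if_pos h, h, min_eq_left (by linarith), min_eq_right (by linarith), min_self]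
      ring
    · filter_upwards [Ioo_mem_nhdsGT (sub_pos.2 h)] with ε hε
      rw [if_neg h.ne', min_eq_right (by linarith [hε.2]), min_eq_right (by linarith [hε.1]),
        min_eq_right h.le]
      ring
  filter_upwards [Filter.eventually_all.2 hterm] with ε hε
  rw [mul_sum, ← sum_add_distrib, ← sum_sub_distrib, sum_congr rfl fun i _ => hε i, ← sum_filter,
    sum_const, nsmul_eq_mul, mul_neg]

lemma exists_perm_of_sum_min_eq {x y : ι → ℝ} (h : ∀ t, ∑ i, min (x i) t = ∑ i, min (y i) t) :
    ∃ σ : Equiv.Perm ι, x = y ∘ σ := by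
  refine exists_perm_of_card_fiber_eq fun v => ?_
  obtain ⟨ε, ⟨hx, hy⟩, hε : 0 < ε⟩ := ((eventually_sum_min_second_difference x v).and
    (eventually_sum_min_second_difference y v)).and self_mem_nhdsWithin |>.exists
  rw [h, h, h, hy, neg_inj] at hx
  exact_mod_cast (mul_right_cancel₀ hε.ne' hx).symm

lemma mul_klFun_div {a b : ℝ} (h : a = 0 → b = 0) :
    a * InformationTheory.klFun (b / a) = -(b * Real.log a) - Real.negMulLog b + (a - b) := by
  rcases eq_or_ne b 0 with rfl | hb
  · simp [InformationTheory.klFun_zero]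
  have ha : a ≠ 0 := mt h hb
  rw [InformationTheory.klFun, Real.log_div hb ha, Real.negMulLog]
  field_simp
  ring

lemma sum_mul_klFun_div {x y : ι → ℝ} (hsum : ∑ i, y i = ∑ i, x i) (hxy : ∀ i, x i = 0 → y i = 0) :
    ∑ i, x i * InformationTheory.klFun (y i / x i) =
      -∑ i, y i * Real.log (x i) - shannonEntropy y := by
  rw [sum_congr rfl fun i _ => mul_klFun_div (hxy i), sum_add_distrib, sum_sub_distrib,
    sum_sub_distrib, sum_neg_distrib, hsum, sub_self, add_zero, shannonEntropy]

-- Gibbs' inequality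
lemma shannonEntropy_le_neg_sum_mul_log {x y : ι → ℝ} (hx : ∀ i, 0 ≤ x i) (hy : ∀ i, 0 ≤ y i)
    (hsum : ∑ i, y i = ∑ i, x i) (hxy : ∀ i, x i = 0 → y i = 0) :
    shannonEntropy y ≤ -∑ i, y i * Real.log (x i) := by
  rw [← sub_nonneg, ← sum_mul_klFun_div hsum hxy]
  exact sum_nonneg fun i _ =>
    mul_nonneg (hx i) (InformationTheory.klFun_nonneg (div_nonneg (hy i) (hx i)))

lemma eq_of_shannonEntropy_eq_neg_sum_mul_log {x y : ι → ℝ} (hx : ∀ i, 0 ≤ x i)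
    (hy : ∀ i, 0 ≤ y i) (hsum : ∑ i, y i = ∑ i, x i) (hxy : ∀ i, x i = 0 → y i = 0)
    (h : shannonEntropy y = -∑ i, y i * Real.log (x i)) : y = x := by
  have hnn (i : ι) : 0 ≤ y i / x i := div_nonneg (hy i) (hx i)
  rw [eq_comm, ← sub_eq_zero, ← sum_mul_klFun_div hsum hxy, sum_eq_zero_iff_of_nonneg fun i _ =>
    mul_nonneg (hx i) (InformationTheory.klFun_nonneg (hnn i))] at h
  ext i
  rcases mul_eq_zero.1 (h i (mem_univ i)) with h0 | h1
  · rw [h0, hxy i h0]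
  · exact eq_of_div_eq_one ((InformationTheory.klFun_eq_zero_iff (hnn i)).1 h1)

variable [DecidableEq ι] [DecidableEq κ]

lemma PMaj.sum_min_div_le {x : ι → ℝ} {y : κ → ℝ} (h : PMaj x y) {t : ℝ} (ht : 0 ≤ t) :
    ∑ j, min (y j) t / t ≤ ∑ i, min (x i) t / t := by
  simpa only [← sum_div] using div_le_div_of_nonneg_right (h.sum_min_le ht) ht

lemma PMaj.shannonEntropy_le {x : ι → ℝ} {y : κ → ℝ} (h : PMaj x y) (hy : IsProbVec y) :
    shannonEntropy y ≤ shannonEntropy x := by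
  have hx := h.isProbVec hy
  have := setIntegral_mono_on hy.integrableOn_sum_min_div hx.integrableOn_sum_min_div
    measurableSet_Ioo fun t ht => h.sum_min_div_le ht.1.le
  rw [hx.setIntegral_sum_min_div, hy.setIntegral_sum_min_div] at this
  linarith

lemma PMaj.sum_min_eq_of_shannonEntropy_eq {x : ι → ℝ} {y : κ → ℝ} (h : PMaj x y)
    (hy : IsProbVec y) (heq : shannonEntropy x = shannonEntropy y) {t : ℝ} (ht : 0 < t) :
    ∑ i, min (x i) t = ∑ j, min (y j) t := by
  have hx := h.isProbVec hy
  rcases lt_or_ge t 1 with ht1 | ht1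
  · have hae : (fun t => ∑ j, min (y j) t / t) =ᵐ[volume.restrict (Set.Ioo 0 1)]
        fun t => ∑ i, min (x i) t / t := by
      refine (integral_eq_iff_of_ae_le hy.integrableOn_sum_min_div hx.integrableOn_sum_min_div ?_).1
        (by rw [hx.setIntegral_sum_min_div, hy.setIntegral_sum_min_div, heq])
      filter_upwards [ae_restrict_mem measurableSet_Ioo] with s hs using h.sum_min_div_le hs.1.le
    have := Measure.eqOn_open_of_ae_eq hae isOpen_Ioo (continuousOn_sum_min_div y)
      (continuousOn_sum_min_div x) ⟨ht, ht1⟩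
    simp only [← sum_div] at this
    exact ((div_left_inj' ht.ne').1 this).symm
  · rw [sum_congr rfl fun i _ => min_eq_left ((hx.le_one i).trans ht1),
      sum_congr rfl fun j _ => min_eq_left ((hy.le_one j).trans ht1), h.2]

lemma PMaj.exists_perm_of_shannonEntropy_eq {x y : ι → ℝ} (h : PMaj x y) (hy : IsProbVec y)
    (heq : shannonEntropy x = shannonEntropy y) : ∃ σ : Equiv.Perm ι, x = y ∘ σ := by
  refine exists_perm_of_sum_min_eq fun t => ?_
  rcases lt_or_ge 0 t with ht | ht
  · exact h.sum_min_eq_of_shannonEntropy_eq hy heq ht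
  · rw [sum_congr rfl fun i _ => min_eq_right (ht.trans ((h.isProbVec hy).1 i)),
      sum_congr rfl fun i _ => min_eq_right (ht.trans (hy.1 i))]

end Entropy

section TensorPower

open Finset

variable {α : Type*}

/-- The `n`-fold tensor power of a vector, indexed by `n`-tuples. -/
def powVec (p : α → ℝ) (n : ℕ) : (Fin n → α) → ℝ := fun x => ∏ k, p (x k)

lemma powVec_nonneg {p : α → ℝ} (hp : ∀ a, 0 ≤ p a) (n : ℕ) (x : Fin n → α) : 0 ≤ powVec p n x :=
  prod_nonneg fun _ _ => hp _

lemma powVec_ne_zero_iff {p : α → ℝ} {n : ℕ} {x : Fin n → α} :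
    powVec p n x ≠ 0 ↔ ∀ k, p (x k) ≠ 0 := by
  simp [powVec, prod_ne_zero_iff]

lemma log_powVec {p : α → ℝ} {n : ℕ} {x : Fin n → α} (hx : powVec p n x ≠ 0) :
    Real.log (powVec p n x) = ∑ k, Real.log (p (x k)) :=
  Real.log_prod fun k _ => powVec_ne_zero_iff.1 hx k

lemma powVec_pow (p : α → ℝ) (k n : ℕ) : powVec (p ^ k) n = powVec p n ^ k :=
  funext fun _ => prod_pow _ _ _

variable [Fintype α]

lemma sum_powVec (p : α → ℝ) (n : ℕ) : ∑ x, powVec p n x = (∑ a, p a) ^ n := by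
  classical
  simp only [powVec, Fintype.sum_pow]

protected lemma IsProbVec.powVec {p : α → ℝ} (hp : IsProbVec p) (n : ℕ) : IsProbVec (powVec p n) :=
  ⟨powVec_nonneg hp.1 n, by rw [sum_powVec, hp.2, one_pow]⟩

lemma card_powVec_ne_zero (p : α → ℝ) (n : ℕ) :
    #{x | powVec p n x ≠ 0} = #{a | p a ≠ 0} ^ n := by
  have : ({x | powVec p n x ≠ 0} : Finset _) = Fintype.piFinset fun _ : Fin n => {a | p a ≠ 0} := by
    ext x
    simp only [mem_filter, mem_univ, true_and, Fintype.mem_piFinset, powVec_ne_zero_iff]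
  rw [this, Fintype.card_piFinset_const]

lemma linearIndependent_fun_pow (R : Type*) [CommRing R] [IsDomain R] :
    LinearIndependent R fun (r : R) (k : ℕ) => r ^ k :=
  (linearIndependent_monoidHom (Multiplicative ℕ) R).comp (powersHom R) (powersHom R).injective

lemma exists_perm_of_sum_pow_eq {p q : α → ℝ} (h : ∀ k : ℕ, ∑ a, p a ^ k = ∑ a, q a ^ k) :
    ∃ σ : Equiv.Perm α, p = q ∘ σ := by
  have hsum : ∑ a, Finsupp.single (p a) (1 : ℝ) = ∑ a, Finsupp.single (q a) (1 : ℝ) := by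
    refine linearIndependent_fun_pow ℝ (funext fun k => ?_)
    simpa [map_sum, Finsupp.linearCombination_single] using h k
  refine exists_perm_of_card_fiber_eq fun v => ?_
  have := DFunLike.congr_fun hsum v
  simpa [Finsupp.finsetSum_apply, Finsupp.single_apply] using this

lemma exists_perm_of_powVec_eq {ι : Type*} [Finite ι] {p q : ι → ℝ} (hp : ∀ i, 0 ≤ p i)
    (hq : ∀ i, 0 ≤ q i) {n : ℕ} (hn : n ≠ 0) {σ : Equiv.Perm (Fin n → ι)}
    (h : powVec p n = powVec q n ∘ σ) : ∃ τ : Equiv.Perm ι, p = q ∘ τ := by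
  cases nonempty_fintype ι
  refine exists_perm_of_sum_pow_eq fun k => ?_
  have hpow (r : ι → ℝ) : (∑ i, r i ^ k) ^ n = ∑ x, powVec r n x ^ k := by
    simpa only [powVec_pow, Pi.pow_apply] using (sum_powVec (r ^ k) n).symm
  refine (pow_left_inj₀ (sum_nonneg fun i _ => pow_nonneg (hp i) k)
    (sum_nonneg fun i _ => pow_nonneg (hq i) k) hn).1 ?_
  rw [hpow, hpow, h]
  exact Equiv.sum_comp σ fun x => powVec q n x ^ k

variable [DecidableEq α]

/-- The `k`-th marginal of a vector on `n`-tuples. -/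
def marginal {n : ℕ} (k : Fin n) : ((Fin n → α) → ℝ) →ₗ[ℝ] (α → ℝ) :=
  LinearMap.pi fun a => ∑ x with x k = a, LinearMap.proj x

lemma marginal_apply {n : ℕ} (k : Fin n) (P : (Fin n → α) → ℝ) (a : α) :
    marginal k P a = ∑ x with x k = a, P x := by
  simp [marginal]

lemma sum_marginal_mul {n : ℕ} (k : Fin n) (P : (Fin n → α) → ℝ) (f : α → ℝ) :
    ∑ a, marginal k P a * f a = ∑ x, P x * f (x k) := by
  rw [← sum_fiberwise univ fun x : Fin n → α => x k]
  refine sum_congr rfl fun a _ => ?_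
  rw [marginal_apply, sum_mul]
  exact sum_congr rfl fun x hx => by rw [(mem_filter.1 hx).2]

lemma marginal_powVec {p : α → ℝ} (hp : IsProbVec p) {n : ℕ} (k : Fin n) :
    marginal k (powVec p n) = p := by
  ext a
  have : ({x | x k = a} : Finset (Fin n → α)) =
      Fintype.piFinset (Function.update (fun _ => univ) k ({a} : Finset α)) := by
    ext x
    simp [Function.forall_update_iff (fun _ => univ) fun l (s : Finset α) => x l ∈ s]
  rw [marginal_apply, this]
  simp only [powVec]
  rw [← prod_univ_sum, Fintype.prod_eq_single k fun l hl => ?_]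
  · rw [Function.update_self, sum_singleton]
  · rw [Function.update_of_ne hl, hp.2]

lemma ne_zero_of_marginal_eq {q : α → ℝ} {n : ℕ} {P : (Fin n → α) → ℝ} (hP : ∀ x, 0 ≤ P x)
    (hm : ∀ k, marginal k P = q) {x : Fin n → α} (hx : P x ≠ 0) (k : Fin n) : q (x k) ≠ 0 := by
  rw [← hm k, marginal_apply]
  have hle : P x ≤ ∑ y with y k = x k, P y :=
    single_le_sum (fun y _ => hP y) (mem_filter.2 ⟨mem_univ x, rfl⟩)
  exact (((hP x).lt_of_ne' hx).trans_le hle).ne'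

lemma powVec_ne_zero_of_marginal_eq {q : α → ℝ} {n : ℕ} {P : (Fin n → α) → ℝ}
    (hP : ∀ x, 0 ≤ P x) (hm : ∀ k, marginal k P = q) {x : Fin n → α} (hx : P x ≠ 0) :
    powVec q n x ≠ 0 :=
  powVec_ne_zero_iff.2 (ne_zero_of_marginal_eq hP hm hx)

lemma neg_sum_mul_log_powVec {q : α → ℝ} {n : ℕ} {P : (Fin n → α) → ℝ} (hP : ∀ x, 0 ≤ P x)
    (hm : ∀ k, marginal k P = q) :
    -∑ x, P x * Real.log (powVec q n x) = n * shannonEntropy q := by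
  have hlog (x : Fin n → α) :
      P x * Real.log (powVec q n x) = ∑ k, P x * Real.log (q (x k)) := by
    by_cases hx : P x = 0
    · simp only [hx, zero_mul, sum_const_zero]
    · rw [log_powVec (powVec_ne_zero_of_marginal_eq hP hm hx), mul_sum]
  rw [sum_congr rfl fun x _ => hlog x, sum_comm]
  simp only [← sum_marginal_mul _ P fun a => Real.log (q a), hm, sum_const, card_univ,
    Fintype.card_fin, nsmul_eq_mul, shannonEntropy, Real.negMulLog, neg_mul, sum_neg_distrib,
    mul_neg]

omit [DecidableEq α] in
lemma IsProbVec.shannonEntropy_powVec {p : α → ℝ} (hp : IsProbVec p) (n : ℕ) :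
    shannonEntropy (powVec p n) = n * shannonEntropy p := by
  classical
  rw [← neg_sum_mul_log_powVec (hp.powVec n).1 fun k => marginal_powVec hp k]
  simp only [shannonEntropy, Real.negMulLog, neg_mul, sum_neg_distrib]

lemma IsProbVec.shannonEntropy_le_of_marginal_eq {q : α → ℝ} {n : ℕ} {P : (Fin n → α) → ℝ}
    (hP : IsProbVec P) (hq : IsProbVec q) (hm : ∀ k, marginal k P = q) :
    shannonEntropy P ≤ n * shannonEntropy q := by
  rw [← neg_sum_mul_log_powVec hP.1 hm]
  exact shannonEntropy_le_neg_sum_mul_log (hq.powVec n).1 hP.1 (hP.2.trans (hq.powVec n).2.symm)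
    fun x => not_imp_not.1 (powVec_ne_zero_of_marginal_eq hP.1 hm)

lemma IsProbVec.eq_powVec_of_shannonEntropy_eq {q : α → ℝ} {n : ℕ} {P : (Fin n → α) → ℝ}
    (hP : IsProbVec P) (hq : IsProbVec q) (hm : ∀ k, marginal k P = q)
    (h : shannonEntropy P = n * shannonEntropy q) : P = powVec q n := by
  rw [← neg_sum_mul_log_powVec hP.1 hm] at h
  exact eq_of_shannonEntropy_eq_neg_sum_mul_log (hq.powVec n).1 hP.1
    (hP.2.trans (hq.powVec n).2.symm)
    (fun x => not_imp_not.1 (powVec_ne_zero_of_marginal_eq hP.1 hm)) h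

lemma PMaj.card_support_le_of_marginal_eq {p q : α → ℝ} (hp : ∀ a, 0 ≤ p a) {n : ℕ} (hn : n ≠ 0)
    {P : (Fin n → α) → ℝ} (hmaj : PMaj P (powVec p n)) (hm : ∀ k, marginal k P = q) :
    #{a | p a ≠ 0} ≤ #{a | q a ≠ 0} := by
  have hP := hmaj.nonneg (powVec_nonneg hp n)
  rw [← Nat.pow_le_pow_iff_left hn, ← card_powVec_ne_zero, ← card_powVec_ne_zero]
  exact (hmaj.card_support_le (powVec_nonneg hp n)).trans
    (card_le_card (monotone_filter_right _ fun x _ => powVec_ne_zero_of_marginal_eq hP hm))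

lemma PMaj.shannonEntropy_lt_of_marginal_eq {p q : α → ℝ} (hp : IsProbVec p) (hq : IsProbVec q)
    (hne : ¬ ∃ σ : Equiv.Perm α, p = q ∘ σ) {n : ℕ} (hn : n ≠ 0) {P : (Fin n → α) → ℝ}
    (hmaj : PMaj P (powVec p n)) (hm : ∀ k, marginal k P = q) :
    shannonEntropy p < shannonEntropy q := by
  have hP := hmaj.isProbVec (hp.powVec n)
  have hn' : (0 : ℝ) < n := by exact_mod_cast Nat.pos_of_ne_zero hn
  have hpP : n * shannonEntropy p ≤ shannonEntropy P :=
    hp.shannonEntropy_powVec n ▸ hmaj.shannonEntropy_le (hp.powVec n)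
  have hPq : shannonEntropy P ≤ n * shannonEntropy q := hP.shannonEntropy_le_of_marginal_eq hq hm
  refine (le_of_mul_le_mul_left (hpP.trans hPq) hn').lt_of_ne fun heq => hne ?_
  rw [heq] at hpP
  have hPeq := hP.eq_powVec_of_shannonEntropy_eq hq hm (hPq.antisymm hpP)
  obtain ⟨σ, hσ⟩ := hmaj.exists_perm_of_shannonEntropy_eq (hp.powVec n)
    (by rw [hp.shannonEntropy_powVec, heq, hPq.antisymm hpP])
  rw [hPeq] at hσ
  refine exists_perm_of_powVec_eq (σ := σ.symm) hp.1 hq.1 hn ?_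
  rw [hσ, Function.comp_assoc, Equiv.self_comp_symm, Function.comp_id]

end TensorPower

section Typicality

open Finset Filter Topology

variable {α : Type*}

lemma powVec_mul_exp (p f : α → ℝ) (t c : ℝ) {n : ℕ} (x : Fin n → α) :
    powVec (fun a => p a * Real.exp (t * (f a - c))) n x =
      powVec p n x * Real.exp (t * (∑ k, f (x k) - n * c)) := by
  simp only [powVec, prod_mul_distrib, ← Real.exp_sum, ← mul_sum, sum_sub_distrib, sum_const,
    card_univ, Fintype.card_fin, nsmul_eq_mul]

variable [Fintype α] {p s : α → ℝ}

-- The function of `t` in the conclusion is `1` at `0` and has negative derivative there.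
lemma exists_sum_mul_exp_lt_one (hp : IsProbVec p) {f : α → ℝ} {c : ℝ}
    (hc : ∑ a, p a * f a < c) : ∃ t > 0, ∑ a, p a * Real.exp (t * (f a - c)) < 1 := by
  have hderiv : HasDerivAt (fun t : ℝ => ∑ a, p a * Real.exp (t * (f a - c)))
      (∑ a, p a * (Real.exp (0 * (f a - c)) * (1 * (f a - c)))) 0 :=
    HasDerivAt.fun_sum fun a _ => (((hasDerivAt_id' (0 : ℝ)).mul_const _).exp).const_mul _
  have hneg : ∑ a, p a * (Real.exp (0 * (f a - c)) * (1 * (f a - c))) < 0 := by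
    simp only [zero_mul, Real.exp_zero, one_mul]
    simp only [mul_sub, sum_sub_distrib]
    rwa [← sum_mul, hp.2, one_mul, sub_neg]
  obtain ⟨t, ht, ht0 : 0 < t⟩ := ((hderiv.tendsto_slope_zero_right.eventually
    (gt_mem_nhds hneg)).and self_mem_nhdsWithin).exists
  simp only [zero_add, zero_mul, Real.exp_zero, mul_one, hp.2, smul_eq_mul] at ht
  exact ⟨t, ht0, sub_neg.1 (neg_of_mul_neg_right ht (inv_pos.2 ht0).le)⟩

lemma tendsto_sum_powVec_deviation (hp : IsProbVec p) {f : α → ℝ} {c : ℝ}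
    (hc : ∑ a, p a * f a < c) :
    Tendsto (fun n : ℕ => ∑ x : Fin n → α with n * c ≤ ∑ k, f (x k), powVec p n x)
      atTop (𝓝 0) := by
  obtain ⟨t, ht, hr⟩ := exists_sum_mul_exp_lt_one hp hc
  have hr0 : 0 ≤ ∑ a, p a * Real.exp (t * (f a - c)) :=
    sum_nonneg fun a _ => mul_nonneg (hp.1 a) (Real.exp_pos _).le
  refine squeeze_zero (fun n => sum_nonneg fun x _ => powVec_nonneg hp.1 n x) (fun n => ?_)
    (tendsto_pow_atTop_nhds_zero_of_lt_one hr0 hr)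
  simp only [← sum_powVec, powVec_mul_exp]
  have h0 (x : Fin n → α) := powVec_nonneg hp.1 n x
  calc ∑ x : Fin n → α with n * c ≤ ∑ k, f (x k), powVec p n x
      ≤ ∑ x : Fin n → α with n * c ≤ ∑ k, f (x k),
          powVec p n x * Real.exp (t * (∑ k, f (x k) - n * c)) :=
        sum_le_sum fun x hx => le_mul_of_one_le_right (h0 x) <| Real.one_le_exp <|
          mul_nonneg ht.le (sub_nonneg.2 (mem_filter.1 hx).2)
    _ ≤ ∑ x, powVec p n x * Real.exp (t * (∑ k, f (x k) - n * c)) :=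
        sum_le_univ_sum_of_nonneg fun x => mul_nonneg (h0 x) (Real.exp_pos _).le

lemma sum_powVec_filter_le (hp : ∀ a, 0 ≤ p a) {n : ℕ} {A B : (Fin n → α) → Prop}
    [DecidablePred A] [DecidablePred B] (h : ∀ x, 0 < powVec p n x → A x → B x) :
    ∑ x with A x, powVec p n x ≤ ∑ x with B x, powVec p n x := by
  rw [← sum_filter_ne_zero]
  refine sum_le_sum_of_subset_of_nonneg (fun x hx => ?_) fun x _ _ => powVec_nonneg hp n x
  obtain ⟨hA, hx0⟩ := mem_filter.1 hx
  exact mem_filter.2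
    ⟨mem_univ x, h x ((powVec_nonneg hp n x).lt_of_ne' hx0) (mem_filter.1 hA).2⟩

lemma tendsto_sum_powVec_lt_exp (hp : IsProbVec p) {h : ℝ} (hh : shannonEntropy p < h) :
    Tendsto (fun n : ℕ => ∑ x : Fin n → α with powVec p n x < Real.exp (-(n * h)), powVec p n x)
      atTop (𝓝 0) := by
  refine squeeze_zero (fun n => sum_nonneg fun x _ => powVec_nonneg hp.1 n x) (fun n => ?_)
    (tendsto_sum_powVec_deviation hp (f := fun a => -Real.log (p a)) (c := h)
      (by simpa [shannonEntropy, Real.negMulLog] using hh))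
  refine sum_powVec_filter_le hp.1 fun x hx hlt => ?_
  rw [← Real.log_lt_iff_lt_exp hx, log_powVec hx.ne'] at hlt
  rw [sum_neg_distrib]
  exact (lt_neg_of_lt_neg hlt).le

lemma tendsto_sum_powVec_exp_lt (hp : IsProbVec p) {h : ℝ} (hh : h < shannonEntropy p) :
    Tendsto (fun n : ℕ => ∑ x : Fin n → α with Real.exp (-(n * h)) < powVec p n x, powVec p n x)
      atTop (𝓝 0) := by
  refine squeeze_zero (fun n => sum_nonneg fun x _ => powVec_nonneg hp.1 n x) (fun n => ?_)
    (tendsto_sum_powVec_deviation hp (f := fun a => Real.log (p a)) (c := -h)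
      (by simpa [shannonEntropy, Real.negMulLog] using neg_lt_neg hh))
  refine sum_powVec_filter_le hp.1 fun x hx hlt => ?_
  rw [← Real.lt_log_iff_exp_lt hx, log_powVec hx.ne'] at hlt
  rw [mul_neg]
  exact hlt.le

lemma card_exp_le_powVec_le (hp : IsProbVec p) (n : ℕ) (h : ℝ) :
    (#{x : Fin n → α | Real.exp (-(n * h)) ≤ powVec p n x} : ℝ) ≤ Real.exp (n * h) := by
  have hcard : #{x : Fin n → α | Real.exp (-(n * h)) ≤ powVec p n x} • Real.exp (-(n * h)) ≤ 1 :=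
    calc _ ≤ ∑ x : Fin n → α with Real.exp (-(n * h)) ≤ powVec p n x, powVec p n x :=
          card_nsmul_le_sum _ _ _ fun x hx => (mem_filter.1 hx).2
      _ ≤ ∑ x, powVec p n x := sum_le_univ_sum_of_nonneg (powVec_nonneg hp.1 n)
      _ = 1 := (hp.powVec n).2
  rwa [nsmul_eq_mul, ← le_div_iff₀ (Real.exp_pos _), one_div, ← Real.exp_neg, neg_neg] at hcard

lemma sum_powVec_le_card_mul_exp_add (hs : IsProbVec s) {n : ℕ} (h : ℝ) (S : Finset (Fin n → α)) :
    ∑ x ∈ S, powVec s n x ≤ #S * Real.exp (-(n * h)) +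
      ∑ x : Fin n → α with Real.exp (-(n * h)) < powVec s n x, powVec s n x := by
  have h0 (x : Fin n → α) := powVec_nonneg hs.1 n x
  rw [← sum_filter_not_add_sum_filter S (fun x => Real.exp (-(n * h)) < powVec s n x)]
  gcongr
  · calc _ ≤ #(S.filter fun x => ¬ Real.exp (-(n * h)) < powVec s n x) • Real.exp (-(n * h)) :=
          sum_le_card_nsmul _ _ _ fun x hx => not_lt.1 (mem_filter.1 hx).2
      _ ≤ #S • Real.exp (-(n * h)) := by gcongr; exact filter_subset _ _
      _ = _ := nsmul_eq_mul _ _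
  · exact fun _ _ _ => h0 _
  · exact subset_univ S

lemma eventually_exp_le_card (hs : IsProbVec s) {h : ℝ} (hh : h < shannonEntropy s)
    {S : ∀ n : ℕ, Finset (Fin n → α)}
    (hS : Tendsto (fun n => ∑ x ∈ S n, powVec s n x) atTop (𝓝 1)) :
    ∀ᶠ n : ℕ in atTop, Real.exp (n * h) ≤ #(S n) := by
  obtain ⟨h', hlt, hlt'⟩ := exists_between hh
  have hmass := hS.sub (tendsto_sum_powVec_exp_lt hs hlt')
  rw [sub_zero] at hmass
  have hexp : Tendsto (fun n : ℕ => Real.exp (n * (h' - h))) atTop atTop :=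
    Real.tendsto_exp_atTop.comp (tendsto_natCast_atTop_atTop.atTop_mul_const (sub_pos.2 hlt))
  filter_upwards [(hmass.pos_mul_atTop one_pos hexp).eventually_ge_atTop 1] with n hn
  have hcard := sub_le_iff_le_add.2 (sum_powVec_le_card_mul_exp_add hs h' (S n))
  have hone : 1 ≤ #(S n) * Real.exp (-(n * h)) :=
    calc 1 ≤ _ := hn
      _ ≤ #(S n) * Real.exp (-(n * h')) * Real.exp (n * (h' - h)) := by gcongr
      _ = #(S n) * Real.exp (-(n * h)) := by
        rw [mul_assoc, ← Real.exp_add]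
        ring_nf
  rwa [Real.exp_neg, ← div_eq_mul_inv, one_le_div (Real.exp_pos _)] at hone

lemma exists_perm_mapsTo {β : Type*} [Finite β] {S S' T T' : Finset β} (hS : S ⊆ S')
    (hT : T ⊆ T') (h : #S ≤ #T) (h' : #S' ≤ #T') :
    ∃ σ : Equiv.Perm β, (∀ x ∈ S, σ x ∈ T) ∧ ∀ x ∈ S', σ x ∈ T' := by
  classical
  cases nonempty_fintype β
  obtain ⟨U, hUT, hU⟩ := exists_subset_card_eq h
  obtain ⟨U', hUU', hUT', hU'⟩ := exists_subsuperset_card_eq (hUT.trans hT)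
    (hU.trans_le (card_le_card hS)) h'
  let e : S ≃ U := equivOfCardEq hU.symm
  obtain ⟨g, hg⟩ := exists_equiv_extend_of_card_eq (α := S') (t := U') (s := S.subtype (· ∈ S'))
    (f := fun x => e.extendSubtype x) (by simpa using hU'.symm)
    (image_subset_iff.2 fun x hx => hUU' (e.extendSubtype_mem x (mem_subtype.1 hx)))
    ((e.extendSubtype.injective.comp Subtype.val_injective).injOn)
  refine ⟨g.extendSubtype, fun x hx => ?_, fun x hx => hUT' (g.extendSubtype_mem x hx)⟩
  rw [g.extendSubtype_apply_of_mem x (hS hx), hg _ (mem_subtype.2 hx)]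
  exact hUT (e.extendSubtype_mem x hx)

end Typicality

section TypicalMarginals

open Finset Filter Topology

variable {α : Type*} [Fintype α] [DecidableEq α] {p q s : α → ℝ}

lemma tendsto_sum_powVec_count_lt (hs : IsProbVec s) {ε : ℝ} (hε : 0 < ε) :
    Tendsto (fun n : ℕ => ∑ x : Fin n → α with ∀ i, (#{k | x k = i} : ℝ) < n * (s i + ε),
      powVec s n x) atTop (𝓝 1) := by
  have hbad (i : α) : Tendsto (fun n : ℕ => ∑ x : Fin n → α with
      n * (s i + ε) ≤ (#{k | x k = i} : ℝ), powVec s n x) atTop (𝓝 0) := by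
    simpa only [sum_boole] using tendsto_sum_powVec_deviation hs
      (f := fun a => if a = i then 1 else 0) (c := s i + ε) (by simpa using hε)
  have hlim := (tendsto_finsetSum univ fun i _ => hbad i).const_sub 1
  rw [sum_const_zero, sub_zero] at hlim
  refine tendsto_of_tendsto_of_tendsto_of_le_of_le hlim tendsto_const_nhds (fun n => ?_) fun n =>
    (sum_le_univ_sum_of_nonneg (powVec_nonneg hs.1 n)).trans_eq (hs.powVec n).2
  have h0 (x : Fin n → α) := powVec_nonneg hs.1 n x
  rw [sub_le_iff_le_add', ← (hs.powVec n).2,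
    ← sum_filter_not_add_sum_filter univ (fun x => ∀ i, (#{k | x k = i} : ℝ) < n * (s i + ε))]
  gcongr
  simp only [sum_filter]
  rw [sum_comm]
  refine sum_le_sum fun x _ => ?_
  have h0' (i : α) : 0 ≤ if n * (s i + ε) ≤ (#{k | x k = i} : ℝ) then powVec s n x else 0 := by
    split_ifs <;> simp [h0]
  split_ifs with hx
  · exact sum_nonneg fun i _ => h0' i
  · push Not at hx
    obtain ⟨i, hi⟩ := hx
    exact (if_pos hi).symm.trans_le (single_le_sum (fun i _ => h0' i) (mem_univ i))

-- By entropy there are fewer likely sequences for `p` than typical ones for `s`, and by the rank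
-- condition the support of `p^{⊗n}` still fits into that of `q^{⊗n}`.
lemma eventually_exists_perm_count_lt (hp : IsProbVec p) (hs : IsProbVec s) {h : ℝ}
    (hh : h < shannonEntropy s) (hcard : #{a | p a ≠ 0} ≤ #{a | q a ≠ 0})
    (hsq : ∀ a, s a ≠ 0 → q a ≠ 0) {ε : ℝ} (hε : 0 < ε) :
    ∀ᶠ n : ℕ in atTop, ∃ σ : Equiv.Perm (Fin n → α),
      (∀ x, powVec p n x ≠ 0 → powVec q n (σ x) ≠ 0) ∧
      ∀ x, Real.exp (-(n * h)) ≤ powVec p n x →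
        ∀ i, (#{k | σ x k = i} : ℝ) < n * (s i + ε) := by
  have hmass := tendsto_sum_powVec_count_lt hs hε
  filter_upwards [eventually_exp_le_card hs hh
    (hmass.congr fun n => (sum_filter_ne_zero _).symm)] with n hn
  obtain ⟨σ, hσ, hσ'⟩ := exists_perm_mapsTo
    (S := {x | Real.exp (-(n * h)) ≤ powVec p n x}) (S' := {x | powVec p n x ≠ 0})
    (T' := {x | powVec q n x ≠ 0})
    (monotone_filter_right _ fun x _ hx => ((Real.exp_pos _).trans_le hx).ne')
    (fun x hx => mem_filter.2 ⟨mem_univ x, powVec_ne_zero_iff.2 fun k =>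
      hsq _ (powVec_ne_zero_iff.1 (mem_filter.1 hx).2 k)⟩)
    (by exact_mod_cast (card_exp_le_powVec_le hp n h).trans hn)
    (by simpa only [card_powVec_ne_zero] using Nat.pow_le_pow_left hcard n)
  exact ⟨σ, fun x hx => (mem_filter.1 (hσ' x (mem_filter.2 ⟨mem_univ x, hx⟩))).2, fun x hx =>
    (mem_filter.1 (mem_filter.1 (hσ x (mem_filter.2 ⟨mem_univ x, hx⟩))).1).2⟩

/-- The average of the `n` marginals of a vector on `n`-tuples. -/
noncomputable def avgMarginal (n : ℕ) : ((Fin n → α) → ℝ) →ₗ[ℝ] (α → ℝ) :=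
  (n : ℝ)⁻¹ • ∑ k, marginal k

lemma avgMarginal_apply {n : ℕ} (P : (Fin n → α) → ℝ) (a : α) :
    avgMarginal n P a = ∑ x, P x * (#{k | x k = a} / n : ℝ) := by
  simp only [avgMarginal, LinearMap.smul_apply, LinearMap.sum_apply, Pi.smul_apply,
    Finset.sum_apply, marginal_apply, smul_eq_mul, sum_filter]
  rw [sum_comm, mul_sum]
  refine sum_congr rfl fun x _ => ?_
  rw [← sum_filter, sum_const, nsmul_eq_mul]
  ring

protected lemma IsProbVec.avgMarginal {n : ℕ} (hn : n ≠ 0) {P : (Fin n → α) → ℝ}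
    (hP : IsProbVec P) : IsProbVec (avgMarginal n P) := by
  refine ⟨fun a => ?_, ?_⟩
  · rw [avgMarginal_apply]
    exact sum_nonneg fun x _ => mul_nonneg (hP.1 x) (by positivity)
  · simp only [avgMarginal_apply]
    rw [sum_comm, ← hP.2]
    refine sum_congr rfl fun x _ => ?_
    rw [← mul_sum, ← sum_div, ← Nat.cast_sum,
      ← card_eq_sum_card_fiberwise fun k _ => mem_univ (x k), card_univ, Fintype.card_fin,
      div_self (by exact_mod_cast hn), mul_one]

omit [DecidableEq α] in
lemma IsProbVec.sum_mul_le {P g : α → ℝ} (hP : IsProbVec P) {b : ℝ} (hb : 0 ≤ b)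
    (hg : ∀ x, g x ≤ 1) (A : α → Prop) [DecidablePred A] (hA : ∀ x, ¬ A x → g x ≤ b) :
    ∑ x, P x * g x ≤ b + ∑ x with A x, P x := by
  calc ∑ x, P x * g x ≤ ∑ x, (P x * b + if A x then P x else 0) := by
        refine sum_le_sum fun x _ => ?_
        split_ifs with hx
        · exact (mul_le_of_le_one_right (hP.1 x) (hg x)).trans
            (le_add_of_nonneg_left (mul_nonneg (hP.1 x) hb))
        · rw [add_zero]
          exact mul_le_mul_of_nonneg_left (hA x hx) (hP.1 x)
    _ = b + ∑ x with A x, P x := by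
        rw [sum_add_distrib, ← sum_mul, hP.2, one_mul, sum_filter]

lemma eventually_exists_perm_avgMarginal_le_add (hp : IsProbVec p) (hs : IsProbVec s)
    (hlt : shannonEntropy p < shannonEntropy s) (hcard : #{a | p a ≠ 0} ≤ #{a | q a ≠ 0})
    (hsq : ∀ a, s a ≠ 0 → q a ≠ 0) {ε : ℝ} (hε : 0 < ε) :
    ∀ᶠ n : ℕ in atTop, ∃ σ : Equiv.Perm (Fin n → α),
      (∀ i, q i = 0 → avgMarginal n (powVec p n ∘ σ.symm) i = 0) ∧
      ∀ i, avgMarginal n (powVec p n ∘ σ.symm) i ≤ s i + ε := by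
  obtain ⟨h, hph, hhs⟩ := exists_between hlt
  filter_upwards [eventually_exists_perm_count_lt hp hs hhs hcard hsq (half_pos hε),
    (tendsto_sum_powVec_lt_exp hp hph).eventually (gt_mem_nhds (half_pos hε)),
    eventually_ne_atTop 0] with n ⟨σ, hsupp, htyp⟩ hmass hn
  have hn' : (0 : ℝ) < n := by exact_mod_cast Nat.pos_of_ne_zero hn
  have havg (i : α) : avgMarginal n (powVec p n ∘ σ.symm) i =
      ∑ x, powVec p n x * (#{k | σ x k = i} / n : ℝ) := by
    rw [avgMarginal_apply, ← Equiv.sum_comp σ]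
    simp only [Function.comp_apply, Equiv.symm_apply_apply]
  refine ⟨σ, fun i hi => ?_, fun i => ?_⟩ <;> rw [havg]
  · refine sum_eq_zero fun x _ => mul_eq_zero.2 <| or_iff_not_imp_left.2 fun hx => ?_
    rw [filter_false_of_mem fun k _ hk => powVec_ne_zero_iff.1 (hsupp x hx) k (by rwa [hk]),
      card_empty, Nat.cast_zero, zero_div]
  · have hle := (hp.powVec n).sum_mul_le (g := fun x => (#{k | σ x k = i} / n : ℝ))
      (add_nonneg (hs.1 i) (half_pos hε).le)
      (fun x => (div_le_one hn').2 (by exact_mod_cast (card_le_univ _).trans_eq (by simp)))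
      (fun x => powVec p n x < Real.exp (-(n * h)))
      (fun x hx => (div_le_iff₀' hn').2 (htyp x (not_lt.1 hx) i).le)
    linarith

-- Typicality is applied to `(1 - η) q + η e_j`: its coordinates other than `j` leave room `η q_i`.
lemma eventually_exists_perm_avgMarginal_le (hp : IsProbVec p) (hq : IsProbVec q)
    (hlt : shannonEntropy p < shannonEntropy q) (hcard : #{a | p a ≠ 0} ≤ #{a | q a ≠ 0})
    {j : α} (hj : q j ≠ 0) :
    ∀ᶠ n : ℕ in atTop, ∃ σ : Equiv.Perm (Fin n → α),
      ∀ i ≠ j, avgMarginal n (powVec p n ∘ σ.symm) i ≤ q i := by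
  let s (η : ℝ) : α → ℝ := (1 - η) • q + η • Pi.single j 1
  have hcont : Continuous fun η => shannonEntropy (s η) :=
    continuous_shannonEntropy.comp (by fun_prop)
  have hs0 : shannonEntropy p < shannonEntropy (s 0) := by simpa [s] using hlt
  obtain ⟨η, hηlt, hη0, hη1⟩ := ((eventually_nhdsWithin_of_eventually_nhds
    (hcont.tendsto 0 (lt_mem_nhds hs0))).and (Ioo_mem_nhdsGT one_pos)).exists
  have hsprob : IsProbVec (s η) := convex_stdSimplex ℝ α hq (single_mem_stdSimplex ℝ j)
    (sub_nonneg.2 hη1.le) hη0.le (sub_add_cancel 1 η)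
  have hsq (i : α) (hi : i ≠ j) : s η i = (1 - η) * q i := by simp [s, hi]
  have hε : ∀ᶠ ε in 𝓝[>] (0 : ℝ), ∀ i, q i ≠ 0 → ε < η * q i :=
    eventually_all.2 fun i => eventually_imp_distrib_left.2 fun hi =>
      nhdsWithin_le_nhds (gt_mem_nhds (mul_pos hη0 ((hq.1 i).lt_of_ne' hi)))
  obtain ⟨ε, hεq, hε0⟩ := (hε.and self_mem_nhdsWithin).exists
  filter_upwards [eventually_exists_perm_avgMarginal_le_add hp hsprob hηlt hcard
    (fun i hi hqi => hi (by rw [hsq i (fun h => hj (h ▸ hqi)), hqi, mul_zero])) hε0]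
    with n ⟨σ, hzero, hle⟩
  refine ⟨σ, fun i hi => ?_⟩
  rcases eq_or_ne (q i) 0 with hqi | hqi
  · exact (hzero i hqi).trans_le (hq.1 i)
  · linarith [hle i, hsq i hi, hεq i hqi]

end TypicalMarginals

section Construction

open Finset Filter

variable {α : Type*} [Fintype α] {p q : α → ℝ}

lemma IsProbVec.exists_sum_mul_le (hq : IsProbVec q) (w : α → ℝ) :
    ∃ j, q j ≠ 0 ∧ ∀ a : α → ℝ, IsProbVec a → (∀ i ≠ j, a i ≤ q i) →
      ∑ i, a i * w i ≤ ∑ i, q i * w i := by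
  have hne : (univ.filter fun j => q j ≠ 0).Nonempty := by
    obtain ⟨j, -, hj⟩ := exists_ne_zero_of_sum_ne_zero (hq.2.trans_ne one_ne_zero)
    exact ⟨j, mem_filter.2 ⟨mem_univ j, hj⟩⟩
  obtain ⟨j, hj, hmin⟩ := exists_min_image _ w hne
  refine ⟨j, (mem_filter.1 hj).2, fun a ha hle => ?_⟩
  have hterm (i : α) : (a i - q i) * (w i - w j) ≤ 0 := by
    rcases eq_or_ne i j with rfl | hij
    · rw [sub_self, mul_zero]
    rcases eq_or_ne (q i) 0 with hqi | hqi
    · rw [hqi, sub_zero, ((hle i hij).trans_eq hqi).antisymm (ha.1 i), zero_mul]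
    · exact mul_nonpos_of_nonpos_of_nonneg (sub_nonpos.2 (hle i hij))
        (sub_nonneg.2 (hmin i (mem_filter.2 ⟨mem_univ i, hqi⟩)))
  rw [← sub_nonpos]
  calc ∑ i, a i * w i - ∑ i, q i * w i = ∑ i, (a i - q i) * (w i - w j) := by
        simp only [mul_sub, sub_mul, sum_sub_distrib, ← sum_mul, ha.2, hq.2, sub_self, sub_zero]
    _ ≤ 0 := sum_nonpos fun i _ => hterm i

lemma IsProbVec.mem_convexHull_of_forall_le (hq : IsProbVec q) {a : α → α → ℝ}
    (ha : ∀ j, q j ≠ 0 → IsProbVec (a j)) (hle : ∀ j, q j ≠ 0 → ∀ i ≠ j, a j i ≤ q i) :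
    q ∈ convexHull ℝ (a '' {j | q j ≠ 0}) := by
  classical
  by_contra hmem
  obtain ⟨f, u, hu, hf⟩ := geometric_hahn_banach_point_closed (convex_convexHull ℝ _)
    ((Set.toFinite (a '' {j | q j ≠ 0})).isClosed_convexHull ℝ) hmem
  obtain ⟨w, hw⟩ : ∃ w : α → ℝ, ∀ x, f x = ∑ i, x i * w i :=
    ⟨_, LinearMap.pi_apply_eq_sum_univ (f : (α → ℝ) →ₗ[ℝ] ℝ)⟩
  obtain ⟨j, hj, hjle⟩ := hq.exists_sum_mul_le w
  have hfj := hf (a j) (subset_convexHull ℝ _ ⟨j, hj, rfl⟩)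
  have hfle := hjle (a j) (ha j hj) (hle j hj)
  rw [← hw, ← hw] at hfle
  exact (hu.trans hfj).not_ge hfle

variable [DecidableEq α]

lemma marginal_comp_arrowCongr {n : ℕ} (k : Fin n) (e : Equiv.Perm (Fin n))
    (P : (Fin n → α) → ℝ) :
    marginal k (P ∘ e.arrowCongr (Equiv.refl α)) = marginal (e k) P := by
  ext a
  rw [marginal_apply, marginal_apply, sum_filter, sum_filter,
    ← Equiv.sum_comp (e.arrowCongr (Equiv.refl α)) fun x => if x (e k) = a then P x else 0]
  simp [Equiv.arrowCongr]

-- Average the vector over all cyclic shifts of the tuples.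
lemma PMaj.exists_forall_marginal_eq_avgMarginal {n : ℕ} (hn : n ≠ 0) {Q y : (Fin n → α) → ℝ}
    (hQ : PMaj Q y) : ∃ P : (Fin n → α) → ℝ, PMaj P y ∧ ∀ k, marginal k P = avgMarginal n Q := by
  have : NeZero n := ⟨hn⟩
  refine ⟨∑ c, (n : ℝ)⁻¹ • (Q ∘ (Equiv.addRight c).arrowCongr (Equiv.refl α)),
    (convex_setOf_pMaj y).sum_mem (fun _ _ => by positivity) (by simp [hn])
      fun c _ => hQ.comp_equiv _ (Equiv.refl _), fun k => ?_⟩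
  simp only [map_sum, map_smul, marginal_comp_arrowCongr, Equiv.coe_addRight]
  rw [← smul_sum, avgMarginal, LinearMap.smul_apply, LinearMap.sum_apply]
  exact congrArg _ (Equiv.sum_comp (Equiv.addLeft k) fun l => marginal l Q)

lemma IsProbVec.exists_pMaj_powVec_avgMarginal_eq (hp : IsProbVec p) (hq : IsProbVec q)
    (hlt : shannonEntropy p < shannonEntropy q) (hcard : #{a | p a ≠ 0} ≤ #{a | q a ≠ 0}) :
    ∃ n ≠ 0, ∃ Q : (Fin n → α) → ℝ, PMaj Q (powVec p n) ∧ avgMarginal n Q = q := by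
  have hev : ∀ᶠ n : ℕ in atTop, ∀ j, q j ≠ 0 → ∃ σ : Equiv.Perm (Fin n → α),
      ∀ i ≠ j, avgMarginal n (powVec p n ∘ σ.symm) i ≤ q i :=
    eventually_all.2 fun _ => eventually_imp_distrib_left.2 fun hj =>
      eventually_exists_perm_avgMarginal_le hp hq hlt hcard hj
  obtain ⟨n, hσ, hn⟩ := (hev.and (eventually_ne_atTop 0)).exists
  choose! σ hσ using hσ
  let R (j : α) : (Fin n → α) → ℝ := powVec p n ∘ (σ j).symm
  have hmaj (j : α) : PMaj (R j) (powVec p n) :=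
    PMaj.comp_equiv ⟨fun _ => le_rfl, rfl⟩ (σ j).symm (Equiv.refl _)
  have hmem := hq.mem_convexHull_of_forall_le (a := fun j => avgMarginal n (R j))
    (fun j _ => ((hmaj j).isProbVec (hp.powVec n)).avgMarginal hn) hσ
  have hsub : (fun j => avgMarginal n (R j)) '' {j | q j ≠ 0} ⊆
      avgMarginal n '' {Q | PMaj Q (powVec p n)} := by
    rintro _ ⟨j, -, rfl⟩
    exact ⟨R j, hmaj j, rfl⟩
  exact ⟨n, hn, convexHull_min hsub ((convex_setOf_pMaj _).linear_image _) hmem⟩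

theorem IsProbVec.shannonEntropy_lt_and_card_le_iff (hp : IsProbVec p) (hq : IsProbVec q)
    (hne : ¬ ∃ σ : Equiv.Perm α, p = q ∘ σ) :
    shannonEntropy p < shannonEntropy q ∧ #{a | p a ≠ 0} ≤ #{a | q a ≠ 0} ↔
      ∃ n ≠ 0, ∃ P : (Fin n → α) → ℝ, PMaj P (powVec p n) ∧ ∀ k, marginal k P = q := by
  constructor
  · rintro ⟨hlt, hcard⟩
    obtain ⟨n, hn, Q, hQ, rfl⟩ := hp.exists_pMaj_powVec_avgMarginal_eq hq hlt hcard
    exact ⟨n, hn, hQ.exists_forall_marginal_eq_avgMarginal hn⟩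
  · rintro ⟨n, hn, P, hmaj, hm⟩
    exact ⟨hmaj.shannonEntropy_lt_of_marginal_eq hp hq hne hn hm,
      hmaj.card_support_le_of_marginal_eq hp.1 hn hm⟩

end Construction

section LocalUnitaries

open Finset Matrix

variable {κ α R : Type*} [Fintype κ] [CommSemiring R]

/-- The Kronecker product of a family of square matrices, indexed by tuples as `mpow` is. -/
def piKronecker (A : κ → Matrix α α R) : Matrix (κ → α) (κ → α) R :=
  of fun f g => ∏ k, A k (f k) (g k)

lemma piKronecker_mul [DecidableEq κ] [Fintype α] (A B : κ → Matrix α α R) :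
    piKronecker A * piKronecker B = piKronecker fun k => A k * B k := by
  ext f g
  simp only [piKronecker, of_apply, mul_apply, ← prod_mul_distrib]
  rw [prod_univ_sum, Fintype.piFinset_univ]

lemma piKronecker_update_one_apply_update [DecidableEq κ] [DecidableEq α] (i : κ)
    (A : Matrix α α R) (g : κ → α) (b : α) :
    piKronecker (Function.update 1 i A) (Function.update g i b) g = A b (g i) := by
  rw [piKronecker, of_apply, Fintype.prod_eq_single i fun k hk => ?_]
  · rw [Function.update_self, Function.update_self]
  · rw [Function.update_of_ne hk, Function.update_of_ne hk, Pi.one_apply, one_apply_eq]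

lemma piKronecker_update_one_apply_eq_zero [DecidableEq κ] [DecidableEq α] (i : κ)
    (A : Matrix α α R) {g h : κ → α} (hgh : ∀ b, Function.update g i b ≠ h) :
    piKronecker (Function.update 1 i A) h g = 0 := by
  obtain ⟨k, hki, hk⟩ : ∃ k ≠ i, h k ≠ g k := by
    by_contra! hk
    exact hgh (h i) (Function.update_eq_iff.2 ⟨rfl, fun k hki => (hk k hki).symm⟩)
  rw [piKronecker, of_apply]
  refine prod_eq_zero (mem_univ k) ?_
  rw [Function.update_of_ne hki, Pi.one_apply, one_apply_ne hk]

variable {d n : ℕ}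

lemma mpow_eq_piKronecker (A : Matrix (Fin d) (Fin d) ℂ) (n : ℕ) :
    mpow A n = piKronecker fun _ => A :=
  rfl

lemma mpow_mul (A B : Matrix (Fin d) (Fin d) ℂ) (n : ℕ) :
    mpow (A * B) n = mpow A n * mpow B n := by
  simp only [mpow_eq_piKronecker, piKronecker_mul]

lemma mpow_conjTranspose (A : Matrix (Fin d) (Fin d) ℂ) (n : ℕ) : mpow Aᴴ n = (mpow A n)ᴴ := by
  ext f g
  simp only [mpow, of_apply, conjTranspose_apply, star_prod]

lemma isHermitian_mpow {A : Matrix (Fin d) (Fin d) ℂ} (hA : A.IsHermitian) (n : ℕ) :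
    (mpow A n).IsHermitian := by
  rw [IsHermitian, ← mpow_conjTranspose, hA.eq]

lemma mpow_diagonal (p : Fin d → ℝ) (n : ℕ) :
    mpow (diagonal fun a => (p a : ℂ)) n = diagonal fun x => (powVec p n x : ℂ) := by
  ext f g
  simp only [mpow, of_apply]
  rcases eq_or_ne f g with rfl | h
  · simp only [diagonal_apply_eq, powVec, Complex.ofReal_prod]
  · obtain ⟨k, hk⟩ := Function.ne_iff.1 h
    rw [diagonal_apply_ne _ h]
    exact prod_eq_zero (mem_univ k) (diagonal_apply_ne _ hk)

lemma mpow_one (n : ℕ) : mpow (1 : Matrix (Fin d) (Fin d) ℂ) n = 1 := by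
  simpa [powVec] using mpow_diagonal (fun _ : Fin d => 1) n

lemma mpow_mem_unitaryGroup {U : Matrix (Fin d) (Fin d) ℂ} (hU : U ∈ unitaryGroup (Fin d) ℂ)
    (n : ℕ) : mpow U n ∈ unitaryGroup (Fin n → Fin d) ℂ := by
  rw [mem_unitaryGroup_iff, star_eq_conjTranspose] at *
  rw [← mpow_conjTranspose, ← mpow_mul, hU, mpow_one]

lemma trace_ptrExcept_mul (i : Fin n) (M : Matrix (Fin n → Fin d) (Fin n → Fin d) ℂ)
    (A : Matrix (Fin d) (Fin d) ℂ) :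
    (ptrExcept i M * A).trace = (M * piKronecker (Function.update 1 i A)).trace := by
  calc (ptrExcept i M * A).trace
      = ∑ g, ∑ b, M g (Function.update g i b) * A b (g i) := by
        simp only [trace, diag_apply, mul_apply, ptrExcept, of_apply, sum_mul]
        rw [← sum_fiberwise univ fun g : Fin n → Fin d => g i]
        refine sum_congr rfl fun a _ => ?_
        rw [sum_comm]
        exact sum_congr rfl fun g hg => by rw [(mem_filter.1 hg).2]
    _ = ∑ g, ∑ h, M g h * piKronecker (Function.update 1 i A) h g := by
        refine sum_congr rfl fun g _ => sum_of_injOn (Function.update g i)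
          (Function.update_injective g i).injOn (fun _ _ => mem_coe.2 (mem_univ _))
          (fun h _ hh => ?_) fun b _ => ?_
        · rw [piKronecker_update_one_apply_eq_zero i A fun b hb => hh ⟨b, by simp, hb⟩, mul_zero]
        · rw [piKronecker_update_one_apply_update]
    _ = (M * piKronecker (Function.update 1 i A)).trace := by
        simp only [trace, diag_apply, mul_apply]

-- By duality it suffices to conjugate `1 ⊗ ⋯ ⊗ A ⊗ ⋯ ⊗ 1` instead of `M`.
lemma ptrExcept_mpow_mul_mpow {V V' : Matrix (Fin d) (Fin d) ℂ} (hV : V' * V = 1) (i : Fin n)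
    (M : Matrix (Fin n → Fin d) (Fin n → Fin d) ℂ) :
    ptrExcept i (mpow V n * M * mpow V' n) = V * ptrExcept i M * V' := by
  have hupdate (A : Matrix (Fin d) (Fin d) ℂ) :
      mpow V' n * piKronecker (Function.update 1 i A) * mpow V n =
        piKronecker (Function.update 1 i (V' * A * V)) := by
    simp only [mpow_eq_piKronecker, piKronecker_mul]
    congr 1 with k : 1
    rcases eq_or_ne k i with rfl | hk
    · simp only [Function.update_self]
    · simp only [Function.update_of_ne hk, Pi.one_apply, mul_one, hV]
  refine ext_iff_trace_mul_right.2 fun A => ?_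
  calc (ptrExcept i (mpow V n * M * mpow V' n) * A).trace
      = (mpow V n * (M * (mpow V' n * piKronecker (Function.update 1 i A)))).trace := by
        rw [trace_ptrExcept_mul]
        simp only [Matrix.mul_assoc]
    _ = (ptrExcept i M * (V' * A * V)).trace := by
        rw [Matrix.trace_mul_comm, trace_ptrExcept_mul, ← hupdate]
        simp only [Matrix.mul_assoc]
    _ = (V * ptrExcept i M * V' * A).trace := by
        rw [← Matrix.mul_assoc, Matrix.trace_mul_comm]
        simp only [Matrix.mul_assoc]

lemma ptrExcept_apply_self (i : Fin n) (M : Matrix (Fin n → Fin d) (Fin n → Fin d) ℂ)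
    (a : Fin d) : ptrExcept i M a a = ∑ x with x i = a, M x x :=
  sum_congr rfl fun x hx => by rw [← (mem_filter.1 hx).2, Function.update_eq_self]

lemma marginal_re_diag (i : Fin n) (M : Matrix (Fin n → Fin d) (Fin n → Fin d) ℂ) :
    marginal i (fun x => (M x x).re) = fun a => (ptrExcept i M a a).re := by
  ext a
  rw [marginal_apply, ptrExcept_apply_self, Complex.re_sum]

lemma ptrExcept_diagonal (i : Fin n) (P : (Fin n → Fin d) → ℝ) :
    ptrExcept i (diagonal fun x => (P x : ℂ)) = diagonal fun a => (marginal i P a : ℂ) := by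
  ext a b
  rcases eq_or_ne a b with rfl | hab
  · rw [ptrExcept_apply_self, diagonal_apply_eq, marginal_apply, Complex.ofReal_sum]
    simp only [diagonal_apply_eq]
  · rw [diagonal_apply_ne _ hab, ptrExcept, of_apply]
    refine sum_eq_zero fun x hx => diagonal_apply_ne _ fun h => hab ?_
    rw [← (mem_filter.1 hx).2, h, Function.update_self]

end LocalUnitaries

section Spectrum

open Finset Matrix

variable {ι : Type*} [Fintype ι] [DecidableEq ι] {A : Matrix ι ι ℂ}

lemma charpoly_unitary_conj {R : Type*} [CommRing R] [StarRing R] {W : Matrix ι ι R}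
    (hW : W ∈ unitaryGroup ι R) (A : Matrix ι ι R) :
    (W * A * Wᴴ).charpoly = A.charpoly := by
  rw [charpoly_mul_comm, ← Matrix.mul_assoc, ← star_eq_conjTranspose, mem_unitaryGroup_iff'.1 hW,
    Matrix.one_mul]

lemma exists_perm_eigenvalues_unitary_conj_diagonal {W : Matrix ι ι ℂ}
    (hW : W ∈ unitaryGroup ι ℂ) {x : ι → ℝ}
    (hA : (W * (diagonal fun i => (x i : ℂ)) * Wᴴ).IsHermitian) :
    ∃ σ : Equiv.Perm ι, hA.eigenvalues = x ∘ σ := by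
  have hroots := hA.roots_charpoly_eq_eigenvalues
  rw [charpoly_unitary_conj hW, charpoly_diagonal,
    Polynomial.roots_prod _ _ (prod_ne_zero_iff.2 fun i _ => Polynomial.X_sub_C_ne_zero _)]
    at hroots
  refine exists_perm_of_card_fiber_eq fun b => ?_
  have hcount := congrArg (Multiset.count (b : ℂ)) hroots.symm
  simpa [Multiset.count_map, card, filter_val, eq_comm] using hcount

lemma exists_unitary_eq_conj_diagonal (hA : A.IsHermitian) :
    ∃ U ∈ unitaryGroup ι ℂ, A = U * (diagonal fun i => (hA.eigenvalues i : ℂ)) * Uᴴ :=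
  ⟨hA.eigenvectorUnitary, hA.eigenvectorUnitary.2, hA.spectral_theorem⟩

lemma isProbVec_eigenvalues (hA : A.PosSemidef) (ht : A.trace = 1) :
    IsProbVec hA.isHermitian.eigenvalues := by
  refine ⟨hA.eigenvalues_nonneg, ?_⟩
  rw [hA.isHermitian.trace_eq_sum_eigenvalues] at ht
  exact Complex.ofReal_injective (by simpa using ht)

lemma normSq_mem_doublyStochastic {W : Matrix ι ι ℂ} (hW : W ∈ unitaryGroup ι ℂ) :
    (of fun i j => Complex.normSq (W i j)) ∈ doublyStochastic ℝ ι := by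
  refine mem_doublyStochastic_iff_sum.2
    ⟨fun i j => Complex.normSq_nonneg _, fun i => ?_, fun j => ?_⟩
  · have := congrFun₂ (mem_unitaryGroup_iff.1 hW) i i
    simp only [mul_apply, one_apply_eq, star_apply, Complex.star_def, Complex.mul_conj] at this
    exact_mod_cast this
  · have := congrFun₂ (mem_unitaryGroup_iff'.1 hW) j j
    simp only [mul_apply, one_apply_eq, star_apply, Complex.star_def, mul_comm _ (W _ j),
      Complex.mul_conj] at this
    exact_mod_cast this

/-- Schur's theorem. -/
lemma pMaj_re_diag_eigenvalues (hA : A.IsHermitian) :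
    PMaj (fun i => (A i i).re) hA.eigenvalues := by
  obtain ⟨U, hU, hdiag⟩ := exists_unitary_eq_conj_diagonal hA
  convert! pMaj_mulVec_of_mem_doublyStochastic (normSq_mem_doublyStochastic hU) hA.eigenvalues
    using 1
  ext i
  conv_lhs => rw [hdiag]
  rw [mul_apply, Complex.re_sum]
  refine sum_congr rfl fun j _ => ?_
  rw [mul_diagonal, conjTranspose_apply, mul_right_comm, Complex.star_def, Complex.mul_conj,
    ← Complex.ofReal_mul, Complex.ofReal_re]
  rfl

end Spectrum

section Quantum

open Matrix

variable {d n : ℕ} {ρ ρ' : Matrix (Fin d) (Fin d) ℂ}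

lemma exists_perm_eigenvalues_mpow (hρ : ρ.IsHermitian) (hmp : (mpow ρ n).IsHermitian) :
    ∃ σ : Equiv.Perm (Fin n → Fin d), hmp.eigenvalues = powVec hρ.eigenvalues n ∘ σ := by
  obtain ⟨U, hU, hdiag⟩ := exists_unitary_eq_conj_diagonal hρ
  have hmpow : mpow ρ n = mpow U n * (diagonal fun x => (powVec hρ.eigenvalues n x : ℂ)) *
      (mpow U n)ᴴ := by
    conv_lhs => rw [hdiag]
    rw [mpow_mul, mpow_mul, mpow_diagonal, mpow_conjTranspose]
  have hM := hmpow ▸ hmp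
  obtain ⟨σ, hσ⟩ :=
    exists_perm_eigenvalues_unitary_conj_diagonal (mpow_mem_unitaryGroup hU n) hM
  exact ⟨σ, ((hmp.eigenvalues_eq_eigenvalues_iff hM).2 (congrArg charpoly hmpow)).trans hσ⟩

lemma exists_posSemidef_ptrExcept_eq (hρ : ρ.IsHermitian) (hρ' : ρ'.IsHermitian)
    {P : (Fin n → Fin d) → ℝ} (hP : IsProbVec P) (hmaj : PMaj P (powVec hρ.eigenvalues n))
    (hm : ∀ k, marginal k P = hρ'.eigenvalues) :
    ∃ (ρn : Matrix (Fin n → Fin d) (Fin n → Fin d) ℂ) (hρn : ρn.PosSemidef), ρn.trace = 1 ∧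
      (∃ hmp : (mpow ρ n).IsHermitian, PMaj hρn.isHermitian.eigenvalues hmp.eigenvalues) ∧
      ∀ i, ptrExcept i ρn = ρ' := by
  obtain ⟨U, hU, hdiag⟩ := exists_unitary_eq_conj_diagonal hρ'
  have hU1 : Uᴴ * U = 1 := mem_unitaryGroup_iff'.1 hU
  have hW := mpow_mem_unitaryGroup hU n
  have hD : (diagonal fun x => (P x : ℂ)).PosSemidef :=
    .diagonal fun x => Complex.zero_le_real.2 (hP.1 x)
  have hρn := hD.mul_mul_conjTranspose_same (mpow U n)
  refine ⟨_, hρn, ?_, ⟨isHermitian_mpow hρ n, ?_⟩, fun i => ?_⟩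
  · rw [trace_mul_cycle, ← star_eq_conjTranspose, mem_unitaryGroup_iff'.1 hW, Matrix.one_mul,
      trace_diagonal]
    exact_mod_cast hP.2
  · obtain ⟨σ, hσ⟩ := exists_perm_eigenvalues_unitary_conj_diagonal hW hρn.isHermitian
    obtain ⟨τ, hτ⟩ := exists_perm_eigenvalues_mpow hρ (isHermitian_mpow hρ n)
    rw [hσ, hτ]
    exact hmaj.comp_equiv σ τ
  · rw [← mpow_conjTranspose, ptrExcept_mpow_mul_mpow hU1,
      ptrExcept_diagonal, hm, ← hdiag]

lemma exists_pMaj_powVec_marginal_eq_eigenvalues (hρ : ρ.IsHermitian) (hρ' : ρ'.IsHermitian)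
    {ρn : Matrix (Fin n → Fin d) (Fin n → Fin d) ℂ} (hρn : ρn.IsHermitian)
    {hmp : (mpow ρ n).IsHermitian} (hmaj : PMaj hρn.eigenvalues hmp.eigenvalues)
    (hptr : ∀ i, ptrExcept i ρn = ρ') :
    ∃ P : (Fin n → Fin d) → ℝ, PMaj P (powVec hρ.eigenvalues n) ∧
      ∀ k, marginal k P = hρ'.eigenvalues := by
  obtain ⟨U, hU, hdiag⟩ := exists_unitary_eq_conj_diagonal hρ'
  obtain ⟨τ, hτ⟩ := exists_perm_eigenvalues_mpow hρ hmp
  have hU1 : Uᴴ * U = 1 := mem_unitaryGroup_iff'.1 hU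
  have hU2 : U * Uᴴ = 1 := mem_unitaryGroup_iff.1 hU
  have hW : mpow Uᴴ n ∈ unitaryGroup (Fin n → Fin d) ℂ :=
    mpow_mem_unitaryGroup (Unitary.star_mem hU) n
  have hM := isHermitian_mul_mul_conjTranspose (mpow Uᴴ n) hρn
  have heig : hM.eigenvalues = hρn.eigenvalues :=
    (hM.eigenvalues_eq_eigenvalues_iff hρn).2 (charpoly_unitary_conj hW ρn)
  refine ⟨fun x => ((mpow Uᴴ n * ρn * (mpow Uᴴ n)ᴴ) x x).re,
    (pMaj_re_diag_eigenvalues hM).trans ?_, fun k => ?_⟩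
  · rw [heig]
    simpa only [hτ, Function.comp_assoc, Equiv.self_comp_symm, Function.comp_id,
      Equiv.coe_refl] using hmaj.comp_equiv (Equiv.refl _) τ.symm
  · have hptr' : ptrExcept k (mpow Uᴴ n * ρn * (mpow Uᴴ n)ᴴ) =
        diagonal fun a => (hρ'.eigenvalues a : ℂ) := by
      rw [← mpow_conjTranspose, conjTranspose_conjTranspose,
        ptrExcept_mpow_mul_mpow hU2, hptr]
      conv_lhs => rw [hdiag]
      simp only [← Matrix.mul_assoc, hU1, Matrix.one_mul]
      rw [Matrix.mul_assoc, hU1, Matrix.mul_one]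
    simp only [marginal_re_diag, hptr', diagonal_apply_eq, Complex.ofReal_re]

end Quantum

/-- Wilming's theorem (catalytic entropy conjecture of Boes, Ng and Wilming): for density
matrices `ρ, ρ'` that are not unitarily equivalent, strict increase of von Neumann
entropy together with non-decreasing rank is equivalent to the existence of an `n`-copy
state majorized by `ρ^{⊗n}` all of whose single-site marginals equal `ρ'`. -/
theorem wilming_catalytic_entropy {d : ℕ} (ρ ρ' : Matrix (Fin d) (Fin d) ℂ)
    (hρ : ρ.PosSemidef) (hρ' : ρ'.PosSemidef)
    (hρt : ρ.trace = 1) (hρ't : ρ'.trace = 1)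
    (hne : ¬ ∃ σ : Equiv.Perm (Fin d),
        hρ.isHermitian.eigenvalues = hρ'.isHermitian.eigenvalues ∘ σ) :
    ((- ∑ i, hρ.isHermitian.eigenvalues i * Real.log (hρ.isHermitian.eigenvalues i)) <
        (- ∑ i, hρ'.isHermitian.eigenvalues i * Real.log (hρ'.isHermitian.eigenvalues i)) ∧
      ρ.rank ≤ ρ'.rank) ↔
    ∃ n : ℕ, 1 ≤ n ∧ ∃ (ρn : Matrix (Fin n → Fin d) (Fin n → Fin d) ℂ)
      (hρn : ρn.PosSemidef),
      ρn.trace = 1 ∧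
      (∃ hmp : (mpow ρ n).IsHermitian,
        PMaj hρn.isHermitian.eigenvalues hmp.eigenvalues) ∧
      (∀ i : Fin n, ptrExcept i ρn = ρ') := by
  have hp := isProbVec_eigenvalues hρ hρt
  have hq := isProbVec_eigenvalues hρ' hρ't
  have hiff := hp.shannonEntropy_lt_and_card_le_iff hq hne
  simp only [shannonEntropy, Real.negMulLog, neg_mul, Finset.sum_neg_distrib] at hiff
  rw [hρ.isHermitian.rank_eq_card_non_zero_eigs, hρ'.isHermitian.rank_eq_card_non_zero_eigs,
    Fintype.card_subtype, Fintype.card_subtype, hiff]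
  refine exists_congr fun n => and_congr Nat.one_le_iff_ne_zero.symm ⟨?_, ?_⟩
  · rintro ⟨P, hmaj, hm⟩
    exact exists_posSemidef_ptrExcept_eq hρ.isHermitian hρ'.isHermitian
      (hmaj.isProbVec (hp.powVec n)) hmaj hm
  · rintro ⟨ρn, hρn, -, ⟨hmp, hmaj⟩, hptr⟩
    exact exists_pMaj_powVec_marginal_eq_eigenvalues hρ.isHermitian hρ'.isHermitian
      hρn.isHermitian hmaj hptr
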